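/- arXiv:1405.2221 — 8 statements merged into one kernel-verified Lean document; each statement's English description precedes it below -/
import Mathlib

section
/- Let P > 0 and 0 ≤ a₁ < a₂ be real numbers with a₁·a₂ ≥ P+1, and set γ = √((P+1)/(a₁·a₂)) (so that 0 < γ ≤ 1). Then (1/2)·log₂(1+P+γ²·a₁²+2·γ·a₁·√P) + (1/2)·log₂(1+P+γ²·a₂²+2·γ·a₂·√P) − (1/2)·log₂(γ²·(a₂−a₁)²) ≤ (1/2)·log₂(1+P) + log₂((a₂+a₁)/(a₂−a₁)) + 2. -/
/-!
A received power `1 + (√P + γ a) ^ 2` is at most `2 (1 + P + (γ a) ^ 2)`. The factor `2` costs half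
a bit at each of the two fading values, one bit in total. What remains is half the logarithm of
`(1 + P + (γ a₁) ^ 2) (1 + P + (γ a₂) ^ 2) / (γ (a₂ - a₁)) ^ 2`. This quotient is smallest when
`γ ^ 2 a₁ a₂ = 1 + P`, and there it factors as `(1 + P) ((a₂ + a₁) / (a₂ - a₁)) ^ 2`.
-/

open Real

lemma mul_div_sq_eq_of_sq_mul_mul_eq {K : Type*} [Field K] {γ a₁ a₂ c : K} (hγ : γ ≠ 0)
    (hc : γ ^ 2 * (a₁ * a₂) = c) :
    (c + (γ * a₁) ^ 2) * (c + (γ * a₂) ^ 2) / (γ * (a₂ - a₁)) ^ 2 =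
      c * ((a₂ + a₁) / (a₂ - a₁)) ^ 2 := by
  have hfactor : (c + (γ * a₁) ^ 2) * (c + (γ * a₂) ^ 2) = γ ^ 2 * (c * (a₂ + a₁) ^ 2) := by
    rw [← hc]
    ring
  rw [hfactor, mul_pow, mul_div_mul_left _ _ (pow_ne_zero 2 hγ), div_pow, mul_div_assoc]

/-- The power of the output `X + a S + Z` for an input `X` of power `P`, an interference `S` of
power `γ ^ 2` fully correlated with `X`, and independent noise `Z` of unit power. -/
noncomputable def coherentPower (P γ a : ℝ) : ℝ :=
  1 + P + γ ^ 2 * a ^ 2 + 2 * γ * a * √P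

/-- The outer bound, in bits, for the dirty paper channel with fading values `a₁` and `a₂`, as a
function of the scaling `γ` over which it is optimized. -/
noncomputable def outerBound (P a₁ a₂ γ : ℝ) : ℝ :=
  (1 / 2) * logb 2 (coherentPower P γ a₁) + (1 / 2) * logb 2 (coherentPower P γ a₂)
    - (1 / 2) * logb 2 (γ ^ 2 * (a₂ - a₁) ^ 2)

section

variable {P γ a₁ a₂ : ℝ}

lemma coherentPower_eq_one_add_sq (hP : 0 ≤ P) (γ a : ℝ) :
    coherentPower P γ a = 1 + (√P + γ * a) ^ 2 := by
  rw [coherentPower, add_sq, sq_sqrt hP]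
  ring

lemma coherentPower_pos (hP : 0 ≤ P) (γ a : ℝ) : 0 < coherentPower P γ a := by
  rw [coherentPower_eq_one_add_sq hP]
  positivity

lemma coherentPower_le_two_mul (hP : 0 ≤ P) (γ a : ℝ) :
    coherentPower P γ a ≤ 2 * (1 + P + (γ * a) ^ 2) :=
  calc coherentPower P γ a
      = 1 + (√P + γ * a) ^ 2 := coherentPower_eq_one_add_sq hP γ a
    _ ≤ 1 + 2 * (√P ^ 2 + (γ * a) ^ 2) := by gcongr; exact add_sq_le
    _ ≤ 2 * (1 + P + (γ * a) ^ 2) := by rw [sq_sqrt hP]; linarith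

lemma outerBound_eq_half_logb (hP : 0 ≤ P) (hγ : γ ≠ 0) (ha : a₁ ≠ a₂) :
    outerBound P a₁ a₂ γ =
      (1 / 2) * logb 2 (coherentPower P γ a₁ * coherentPower P γ a₂ / (γ * (a₂ - a₁)) ^ 2) := by
  have hA₁ := coherentPower_pos hP γ a₁
  have hA₂ := coherentPower_pos hP γ a₂
  have hdenom : (γ * (a₂ - a₁)) ^ 2 ≠ 0 := pow_ne_zero 2 (mul_ne_zero hγ (sub_ne_zero.2 ha.symm))
  rw [outerBound, logb_div (mul_pos hA₁ hA₂).ne' hdenom, logb_mul hA₁.ne' hA₂.ne', mul_pow]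
  ring

lemma outerBound_le_half_logb_add_one (hP : 0 ≤ P) (hγ : γ ≠ 0) (ha : a₁ ≠ a₂) :
    outerBound P a₁ a₂ γ ≤
      (1 / 2) * logb 2
        ((1 + P + (γ * a₁) ^ 2) * (1 + P + (γ * a₂) ^ 2) / (γ * (a₂ - a₁)) ^ 2) + 1 := by
  set Q := (1 + P + (γ * a₁) ^ 2) * (1 + P + (γ * a₂) ^ 2) / (γ * (a₂ - a₁)) ^ 2
  have hA₁ := coherentPower_pos hP γ a₁
  have hA₂ := coherentPower_pos hP γ a₂
  have hdenom : 0 < (γ * (a₂ - a₁)) ^ 2 :=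
    even_two.pow_pos (mul_ne_zero hγ (sub_ne_zero.2 ha.symm))
  have hQ : 0 < Q := div_pos (by positivity) hdenom
  have hquot : coherentPower P γ a₁ * coherentPower P γ a₂ / (γ * (a₂ - a₁)) ^ 2 ≤ 2 ^ 2 * Q :=
    calc coherentPower P γ a₁ * coherentPower P γ a₂ / (γ * (a₂ - a₁)) ^ 2
        ≤ 2 * (1 + P + (γ * a₁) ^ 2) * (2 * (1 + P + (γ * a₂) ^ 2)) / (γ * (a₂ - a₁)) ^ 2 := by
          gcongr <;> exact coherentPower_le_two_mul hP _ _
      _ = 2 ^ 2 * Q := by ring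
  calc outerBound P a₁ a₂ γ
      = (1 / 2) * logb 2 (coherentPower P γ a₁ * coherentPower P γ a₂ / (γ * (a₂ - a₁)) ^ 2) :=
        outerBound_eq_half_logb hP hγ ha
    _ ≤ (1 / 2) * logb 2 (2 ^ 2 * Q) := by gcongr; exact one_lt_two
    _ = (1 / 2) * logb 2 Q + 1 := by
        rw [logb_mul (by norm_num) hQ.ne', logb_pow, logb_self_eq_one one_lt_two]
        push_cast
        ring

theorem outer_bound_two_fading_strong_general (hP : 0 ≤ P) (ha₁ : 0 < a₁) (h₁₂ : a₁ < a₂) :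
    outerBound P a₁ a₂ √((P + 1) / (a₁ * a₂)) ≤
      (1 / 2) * logb 2 (1 + P) + logb 2 ((a₂ + a₁) / (a₂ - a₁)) + 1 := by
  have ha₂ : 0 < a₂ := ha₁.trans h₁₂
  set γ := √((P + 1) / (a₁ * a₂))
  have hγ : γ ≠ 0 := by positivity
  have hγ_sq : γ ^ 2 * (a₁ * a₂) = 1 + P := by
    rw [sq_sqrt (by positivity), div_mul_cancel₀ _ (by positivity), add_comm]
  have hratio : 0 < (a₂ + a₁) / (a₂ - a₁) := div_pos (add_pos ha₂ ha₁) (sub_pos.2 h₁₂)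
  calc outerBound P a₁ a₂ γ
      ≤ (1 / 2) * logb 2
          ((1 + P + (γ * a₁) ^ 2) * (1 + P + (γ * a₂) ^ 2) / (γ * (a₂ - a₁)) ^ 2) + 1 :=
        outerBound_le_half_logb_add_one hP hγ h₁₂.ne
    _ = (1 / 2) * logb 2 ((1 + P) * ((a₂ + a₁) / (a₂ - a₁)) ^ 2) + 1 := by
        rw [mul_div_sq_eq_of_sq_mul_mul_eq hγ hγ_sq]
    _ = (1 / 2) * logb 2 (1 + P) + logb 2 ((a₂ + a₁) / (a₂ - a₁)) + 1 := by
        rw [logb_mul (by positivity) (pow_pos hratio 2).ne', logb_pow]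
        push_cast
        ring

end

/-- Outer bound for two fading values, regime `a₁·a₂ ≥ P+1`, evaluated at the
optimal scaling `γ = √((P+1)/(a₁·a₂))` (Theorem 4 of the paper). -/
theorem outer_bound_two_fading_strong (P a₁ a₂ : ℝ) (hP : 0 < P)
    (ha₁ : 0 ≤ a₁) (h₁₂ : a₁ < a₂) (hprod : P + 1 ≤ a₁ * a₂) :
    let γ := Real.sqrt ((P + 1) / (a₁ * a₂))
    (1/2) * Real.logb 2 (1 + P + γ^2 * a₁^2 + 2 * γ * a₁ * Real.sqrt P)
      + (1/2) * Real.logb 2 (1 + P + γ^2 * a₂^2 + 2 * γ * a₂ * Real.sqrt P)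
      - (1/2) * Real.logb 2 (γ^2 * (a₂ - a₁)^2)
    ≤ (1/2) * Real.logb 2 (1 + P) + Real.logb 2 ((a₂ + a₁) / (a₂ - a₁)) + 2 := by
  have ha₁_pos : 0 < a₁ := pos_of_mul_pos_left (by linarith) (ha₁.trans h₁₂.le)
  exact (outer_bound_two_fading_strong_general hP.le ha₁_pos h₁₂).trans <| by
    gcongr
    exact one_le_two
end

section
/- Let P > 0 and 0 ≤ a₁ < a₂ be real numbers with a₁·a₂ ≤ P+1. Then (1/2)·log₂(1+P+a₁²+2·a₁·√P) + (1/2)·log₂(1+P+a₂²+2·a₂·√P) − (1/2)·log₂((a₂−a₁)²) ≤ (1/2)·log₂(1+P) + (1/2)·log₂(1+P+a₂²) − (1/2)·log₂((a₂−a₁)²) + 3/2. -/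
/-!
By AM-GM the cross term satisfies `2 * a * √P ≤ a ^ 2 + P`. For `a₂` it therefore at most doubles
the argument `1 + P + a₂ ^ 2` of the logarithm, which costs one bit. For `a₁`, the regime
`a₁ * a₂ ≤ P + 1` forces `a₁ ^ 2 ≤ P + 1`, so the argument is at most `4 * (1 + P)`, which costs two
bits. Halving the total of three bits gives the gap `3 / 2`.
-/

theorem logb_le_add_logb_of_le_rpow_mul {b x y r : ℝ} (hb : 1 < b) (hx : 0 < x)
    (h : x ≤ b ^ r * y) : Real.logb b x ≤ r + Real.logb b y := by
  have hb₀ : 0 < b := zero_lt_one.trans hb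
  have hy : 0 < y := pos_of_mul_pos_right (hx.trans_le h) (by positivity)
  calc Real.logb b x ≤ Real.logb b (b ^ r * y) := Real.logb_le_logb_of_le hb hx h
    _ = r + Real.logb b y := by
        rw [Real.logb_mul (by positivity) hy.ne', Real.logb_rpow hb₀ hb.ne']

section CrossTerm

variable {P a : ℝ}

theorem two_mul_mul_sqrt_le_sq_add (hP : 0 ≤ P) : 2 * a * √P ≤ a ^ 2 + P := by
  simpa only [Real.sq_sqrt hP] using two_mul_le_add_sq a √P

theorem one_add_add_sq_add_two_mul_mul_sqrt_pos (hP : 0 ≤ P) :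
    0 < 1 + P + a ^ 2 + 2 * a * √P := by
  have complete_square : 1 + P + a ^ 2 + 2 * a * √P = 1 + (a + √P) ^ 2 := by
    linear_combination -Real.sq_sqrt hP
  rw [complete_square]
  positivity

theorem logb_two_cross_term_le_one_add (hP : 0 ≤ P) :
    Real.logb 2 (1 + P + a ^ 2 + 2 * a * √P) ≤ 1 + Real.logb 2 (1 + P + a ^ 2) := by
  refine logb_le_add_logb_of_le_rpow_mul one_lt_two
    (one_add_add_sq_add_two_mul_mul_sqrt_pos hP) ?_
  rw [Real.rpow_one]
  linarith [two_mul_mul_sqrt_le_sq_add (a := a) hP]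

theorem logb_two_cross_term_le_two_add (hP : 0 ≤ P) (ha : a ^ 2 ≤ P + 1) :
    Real.logb 2 (1 + P + a ^ 2 + 2 * a * √P) ≤ 2 + Real.logb 2 (1 + P) := by
  refine logb_le_add_logb_of_le_rpow_mul one_lt_two
    (one_add_add_sq_add_two_mul_mul_sqrt_pos hP) ?_
  rw [Real.rpow_two]
  linarith [two_mul_mul_sqrt_le_sq_add (a := a) hP]

end CrossTerm

theorem outer_bound_two_fading_weak_general {P a₁ a₂ : ℝ} (hP : 0 ≤ P) (_h₁₂ : a₁ ≠ a₂)
    (ha₁ : a₁ ^ 2 ≤ P + 1) :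
    (1 / 2) * Real.logb 2 (1 + P + a₁ ^ 2 + 2 * a₁ * √P)
      + (1 / 2) * Real.logb 2 (1 + P + a₂ ^ 2 + 2 * a₂ * √P)
      - (1 / 2) * Real.logb 2 ((a₂ - a₁) ^ 2)
    ≤ (1 / 2) * Real.logb 2 (1 + P) + (1 / 2) * Real.logb 2 (1 + P + a₂ ^ 2)
      - (1 / 2) * Real.logb 2 ((a₂ - a₁) ^ 2) + 3 / 2 := by
  linarith [logb_two_cross_term_le_two_add hP ha₁, logb_two_cross_term_le_one_add (a := a₂) hP]

/-- Outer bound for two fading values, regime `a₁·a₂ ≤ P+1`, evaluated at `γ = 1`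
(Theorem 4 of the paper). -/
theorem outer_bound_two_fading_weak (P a₁ a₂ : ℝ) (hP : 0 < P)
    (ha₁ : 0 ≤ a₁) (h₁₂ : a₁ < a₂) (hprod : a₁ * a₂ ≤ P + 1) :
    (1/2) * Real.logb 2 (1 + P + a₁^2 + 2 * a₁ * Real.sqrt P)
      + (1/2) * Real.logb 2 (1 + P + a₂^2 + 2 * a₂ * Real.sqrt P)
      - (1/2) * Real.logb 2 ((a₂ - a₁)^2)
    ≤ (1/2) * Real.logb 2 (1 + P) + (1/2) * Real.logb 2 (1 + P + a₂^2)
      - (1/2) * Real.logb 2 ((a₂ - a₁)^2) + 3/2 := by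
  have ha₁_sq : a₁ ^ 2 ≤ P + 1 := by
    rw [sq]
    exact (mul_le_mul_of_nonneg_left h₁₂.le ha₁).trans hprod
  exact outer_bound_two_fading_weak_general hP.le h₁₂.ne ha₁_sq
end

section
/- Let P > 0 and 0 < a₁ < a₂ be real numbers, and define f : ℝ → ℝ by f(x) = (1/2)·log(1+P+x·a₁²) + (1/2)·log(1+P+x·a₂²) − (1/2)·log(x·(a₂−a₁)²), where log is the natural logarithm. Set x* = (P+1)/(a₁·a₂). Then the second derivative of f at x* equals a₁³·a₂³/((1+P)²·(a₁+a₂)²); in particular it is strictly positive. -/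
/-!
Each logarithm `log (c + x b)` of an affine function contributes `-(b / (c + x b))²` to a second
derivative. In `log (x (a₂ - a₁)²)` the factor `(a₂ - a₁)²` only adds a constant, so the last term
contributes `-x⁻²`. At `x* = (1 + P) / (a₁ a₂)` the other two arguments factor,
`1 + P + x* a₁² = (1 + P) (a₁ + a₂) / a₂` and symmetrically, and the value comes from
`1 - (a₁² + a₂²) / (a₁ + a₂)² = 2 a₁ a₂ / (a₁ + a₂)²`.
-/

section LogAffine

open scoped Nat

lemma deriv_log_const_add_mul (b c x : ℝ) :
    deriv (fun y ↦ Real.log (c + y * b)) x = b * (c + x * b)⁻¹ := by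
  simp only [mul_comm _ b]
  rw [deriv_comp_mul_left b (fun y ↦ Real.log (c + y)) x, deriv_comp_const_add, Real.deriv_log,
    smul_eq_mul]

lemma iteratedDeriv_succ_log_const_add_mul (n : ℕ) (b c x : ℝ) :
    iteratedDeriv (n + 1) (fun y ↦ Real.log (c + y * b)) x =
      (-1) ^ n * n ! * b ^ (n + 1) * (c + x * b) ^ (-1 - n : ℤ) := by
  have first : deriv (fun y ↦ Real.log (c + y * b)) = fun y ↦ b * (b * y + c)⁻¹ := by
    funext y
    rw [deriv_log_const_add_mul, add_comm, mul_comm y]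
  rw [iteratedDeriv_succ', first, iteratedDeriv_const_mul_field, iteratedDeriv_eq_iterate,
    iter_deriv_inv_linear]
  ring_nf

lemma iteratedDeriv_two_log_const_add_mul (b c x : ℝ) :
    iteratedDeriv 2 (fun y ↦ Real.log (c + y * b)) x = -(b / (c + x * b)) ^ 2 := by
  have exponent : (-1 - (1 : ℕ) : ℤ) = -(2 : ℕ) := rfl
  rw [iteratedDeriv_succ_log_const_add_mul 1, exponent, zpow_neg, zpow_natCast, Nat.factorial_one,
    ← inv_pow]
  ring

lemma iteratedDeriv_two_log_mul_const {k : ℝ} (hk : k ≠ 0) (x : ℝ) :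
    iteratedDeriv 2 (fun y ↦ Real.log (y * k)) x = -x⁻¹ ^ 2 := by
  simpa only [zero_add, div_mul_cancel_right₀ hk] using
    iteratedDeriv_two_log_const_add_mul k 0 x

lemma iteratedDeriv_two_half_log_add_half_log_sub_half_log {b₁ b₂ c₁ c₂ k x : ℝ}
    (h₁ : c₁ + x * b₁ ≠ 0) (h₂ : c₂ + x * b₂ ≠ 0) (hk : k ≠ 0) (hx : x ≠ 0) :
    iteratedDeriv 2 (fun y ↦ (1 / 2) * Real.log (c₁ + y * b₁) + (1 / 2) * Real.log (c₂ + y * b₂)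
        - (1 / 2) * Real.log (y * k)) x =
      (x⁻¹ ^ 2 - (b₁ / (c₁ + x * b₁)) ^ 2 - (b₂ / (c₂ + x * b₂)) ^ 2) / 2 := by
  have smooth₁ : ContDiffAt ℝ 2 (fun y ↦ (1 / 2) * Real.log (c₁ + y * b₁)) x := by
    fun_prop (disch := exact h₁)
  have smooth₂ : ContDiffAt ℝ 2 (fun y ↦ (1 / 2) * Real.log (c₂ + y * b₂)) x := by
    fun_prop (disch := exact h₂)
  have smooth₃ : ContDiffAt ℝ 2 (fun y ↦ (1 / 2) * Real.log (y * k)) x := by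
    fun_prop (disch := exact mul_ne_zero hx hk)
  rw [iteratedDeriv_fun_sub (smooth₁.add smooth₂) smooth₃, iteratedDeriv_fun_add smooth₁ smooth₂]
  simp only [iteratedDeriv_const_mul_field, iteratedDeriv_two_log_const_add_mul,
    iteratedDeriv_two_log_mul_const hk]
  ring

end LogAffine

section CriticalPoint

variable {K : Type*} [Field K] {a b : K}

lemma add_div_mul_mul_sq (hb : b ≠ 0) (q : K) :
    q + q / (a * b) * a ^ 2 = q * (a + b) / b := by
  field_simp
  ring

lemma inv_sq_sub_sq_sub_sq_of_eq_div_mul (ha : a ≠ 0) (hb : b ≠ 0) (hab : a + b ≠ 0)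
    {q x : K} (hx : x = q / (a * b)) :
    x⁻¹ ^ 2 - (a ^ 2 / (q + x * a ^ 2)) ^ 2 - (b ^ 2 / (q + x * b ^ 2)) ^ 2 =
      2 * (a ^ 3 * b ^ 3 / (q ^ 2 * (a + b) ^ 2)) := by
  have factor_a : q + x * a ^ 2 = q * (a + b) / b := by
    rw [hx, add_div_mul_mul_sq hb]
  have factor_b : q + x * b ^ 2 = q * (a + b) / a := by
    rw [hx, mul_comm a, add_div_mul_mul_sq ha, add_comm b]
  rw [factor_a, factor_b, hx]
  field_simp
  ring

end CriticalPoint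

/-- Second derivative of the outer-bound objective `f` at the critical point
`x* = (P+1)/(a₁·a₂)` (appendix proof of Theorem 4 of the paper). -/
theorem outer_bound_objective_second_deriv (P a₁ a₂ : ℝ) (hP : 0 < P)
    (ha₁ : 0 < a₁) (h₁₂ : a₁ < a₂) :
    let f : ℝ → ℝ := fun x =>
      (1/2) * Real.log (1 + P + x * a₁^2) + (1/2) * Real.log (1 + P + x * a₂^2)
        - (1/2) * Real.log (x * (a₂ - a₁)^2)
    let xs := (P + 1) / (a₁ * a₂)
    deriv (deriv f) xs = a₁^3 * a₂^3 / ((1 + P)^2 * (a₁ + a₂)^2) ∧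
      0 < a₁^3 * a₂^3 / ((1 + P)^2 * (a₁ + a₂)^2) := by
  intro f xs
  have ha₂ : 0 < a₂ := ha₁.trans h₁₂
  have gap_ne : (a₂ - a₁) ^ 2 ≠ 0 := pow_ne_zero 2 (sub_pos.2 h₁₂).ne'
  have xs_pos : 0 < xs := by positivity
  have xs_eq : xs = (1 + P) / (a₁ * a₂) := by rw [add_comm 1 P]
  have arg_ne (a : ℝ) : 1 + P + xs * a ^ 2 ≠ 0 := by positivity
  refine ⟨?_, by positivity⟩
  calc
    deriv (deriv f) xs = iteratedDeriv 2 f xs := by rw [iteratedDeriv_succ, iteratedDeriv_one]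
    _ = (xs⁻¹ ^ 2 - (a₁ ^ 2 / (1 + P + xs * a₁ ^ 2)) ^ 2
          - (a₂ ^ 2 / (1 + P + xs * a₂ ^ 2)) ^ 2) / 2 :=
      iteratedDeriv_two_half_log_add_half_log_sub_half_log (arg_ne a₁) (arg_ne a₂) gap_ne
        xs_pos.ne'
    _ = a₁ ^ 3 * a₂ ^ 3 / ((1 + P) ^ 2 * (a₁ + a₂) ^ 2) := by
      rw [inv_sq_sub_sq_sub_sq_of_eq_div_mul ha₁.ne' ha₂.ne' (by positivity) xs_eq,
        mul_div_cancel_left₀ _ two_ne_zero]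
end

section
/- Let P > 0 and 0 < a₁ < a₂ be real numbers with a₁·a₂ ≥ P+1, and define f : ℝ → ℝ by f(x) = (1/2)·log(1+P+x·a₁²) + (1/2)·log(1+P+x·a₂²) − (1/2)·log(x·(a₂−a₁)²), where log is the natural logarithm. Set x* = (P+1)/(a₁·a₂), which lies in (0,1]. Then for every x with 0 < x ≤ 1, f(x) ≥ f(x*). -/
/-!
With `c = 1 + P`, completing the square gives
`(c + x a₁²) (c + x a₂²) = c (a₁ + a₂)² x + (c - x a₁ a₂)²`. Hence the argument of the combined
logarithm is the constant `c (a₁ + a₂)² / (a₂ - a₁)²` plus a nonnegative term that vanishes exactly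
at `x = c / (a₁ a₂)`.
-/

/-- The objective of the outer bound optimization for the dirty paper channel with input power `P`
and fading values `a₁`, `a₂`. It is meaningful for `0 < x` and `a₁ ≠ a₂`; elsewhere `Real.log` may
be evaluated at a nonpositive argument. -/
noncomputable def outerBoundObjective (P a₁ a₂ x : ℝ) : ℝ :=
  (1/2) * Real.log (1 + P + x * a₁^2) + (1/2) * Real.log (1 + P + x * a₂^2)
    - (1/2) * Real.log (x * (a₂ - a₁)^2)

theorem add_mul_sq_mul_add_mul_sq {R : Type*} [CommRing R] (a b c x : R) :
    (c + x * a ^ 2) * (c + x * b ^ 2) = c * (a + b) ^ 2 * x + (c - x * (a * b)) ^ 2 := by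
  ring

theorem add_mul_sq_mul_add_mul_sq_div {K : Type*} [Field K] (a b c : K) {d x : K} (hx : x ≠ 0) :
    (c + x * a ^ 2) * (c + x * b ^ 2) / (x * d) =
      c * (a + b) ^ 2 / d + (c - x * (a * b)) ^ 2 / (x * d) := by
  rw [add_mul_sq_mul_add_mul_sq, add_div, mul_comm x d, mul_div_mul_right _ _ hx]

section

variable {P a₁ a₂ x : ℝ}

theorem outerBoundObjective_eq_log_div (hP : 0 < 1 + P) (ha : a₁ ≠ a₂) (hx : 0 < x) :
    outerBoundObjective P a₁ a₂ x =
      (1/2) * Real.log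
        ((1 + P + x * a₁ ^ 2) * (1 + P + x * a₂ ^ 2) / (x * (a₂ - a₁) ^ 2)) := by
  have hd : 0 < (a₂ - a₁) ^ 2 := sq_pos_of_ne_zero (sub_ne_zero.mpr ha.symm)
  have h₁ : 1 + P + x * a₁ ^ 2 ≠ 0 := by positivity
  have h₂ : 1 + P + x * a₂ ^ 2 ≠ 0 := by positivity
  rw [outerBoundObjective, Real.log_div (mul_ne_zero h₁ h₂) (mul_pos hx hd).ne',
    Real.log_mul h₁ h₂]
  ring

theorem outerBoundObjective_eq_log_add_sq (hP : 0 < 1 + P) (ha : a₁ ≠ a₂) (hx : 0 < x) :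
    outerBoundObjective P a₁ a₂ x =
      (1/2) * Real.log ((1 + P) * (a₁ + a₂) ^ 2 / (a₂ - a₁) ^ 2 +
        (1 + P - x * (a₁ * a₂)) ^ 2 / (x * (a₂ - a₁) ^ 2)) := by
  rw [outerBoundObjective_eq_log_div hP ha hx, add_mul_sq_mul_add_mul_sq_div _ _ _ hx.ne']

theorem outerBoundObjective_critical_point (hP : 0 < 1 + P) (ha : a₁ ≠ a₂)
    (hprod : 0 < a₁ * a₂) :
    outerBoundObjective P a₁ a₂ ((P + 1) / (a₁ * a₂)) =
      (1/2) * Real.log ((1 + P) * (a₁ + a₂) ^ 2 / (a₂ - a₁) ^ 2) := by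
  have hxs : 0 < (P + 1) / (a₁ * a₂) := div_pos (by linarith) hprod
  have hsq : (1 + P - (P + 1) / (a₁ * a₂) * (a₁ * a₂)) ^ 2 = 0 := by
    rw [div_mul_cancel₀ _ hprod.ne']
    ring
  rw [outerBoundObjective_eq_log_add_sq hP ha hxs, hsq, zero_div, add_zero]

theorem le_outerBoundObjective (hP : 0 < 1 + P) (ha : a₁ ≠ a₂) (hsum : a₁ + a₂ ≠ 0)
    (hx : 0 < x) :
    (1/2) * Real.log ((1 + P) * (a₁ + a₂) ^ 2 / (a₂ - a₁) ^ 2) ≤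
      outerBoundObjective P a₁ a₂ x := by
  have hd : 0 < (a₂ - a₁) ^ 2 := sq_pos_of_ne_zero (sub_ne_zero.mpr ha.symm)
  have hmin : 0 < (1 + P) * (a₁ + a₂) ^ 2 / (a₂ - a₁) ^ 2 :=
    div_pos (mul_pos hP (sq_pos_of_ne_zero hsum)) hd
  have hsq : 0 ≤ (1 + P - x * (a₁ * a₂)) ^ 2 / (x * (a₂ - a₁) ^ 2) :=
    div_nonneg (sq_nonneg _) (mul_pos hx hd).le
  rw [outerBoundObjective_eq_log_add_sq hP ha hx]
  exact mul_le_mul_of_nonneg_left (Real.log_le_log hmin (le_add_of_nonneg_right hsq)) (by norm_num)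

theorem outer_bound_objective_min_general (hP : 0 < 1 + P) (ha : a₁ ≠ a₂)
    (hprod : 0 < a₁ * a₂) :
    IsMinOn (outerBoundObjective P a₁ a₂) (Set.Ioi 0) ((P + 1) / (a₁ * a₂)) := by
  have hsum : a₁ + a₂ ≠ 0 := fun h => by nlinarith [sq_nonneg (a₁ - a₂)]
  exact isMinOn_iff.mpr fun x hx =>
    (outerBoundObjective_critical_point hP ha hprod).trans_le
      (le_outerBoundObjective hP ha hsum hx)

end

/-- When `a₁·a₂ ≥ P+1`, the critical point `x* = (P+1)/(a₁·a₂) ∈ (0,1]` minimizes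
the outer-bound objective `f` over `(0,1]` (appendix proof of Theorem 4 of the paper). -/
theorem outer_bound_objective_min (P a₁ a₂ : ℝ) (hP : 0 < P)
    (ha₁ : 0 < a₁) (h₁₂ : a₁ < a₂) (hprod : P + 1 ≤ a₁ * a₂) :
    let f : ℝ → ℝ := fun x =>
      (1/2) * Real.log (1 + P + x * a₁^2) + (1/2) * Real.log (1 + P + x * a₂^2)
        - (1/2) * Real.log (x * (a₂ - a₁)^2)
    let xs := (P + 1) / (a₁ * a₂)
    (0 < xs ∧ xs ≤ 1) ∧ ∀ x : ℝ, 0 < x → x ≤ 1 → f xs ≤ f x := by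
  have hpos : 0 < a₁ * a₂ := mul_pos ha₁ (ha₁.trans h₁₂)
  exact ⟨⟨by positivity, (div_le_one hpos).mpr hprod⟩, fun x hx _ =>
    isMinOn_iff.mp (outer_bound_objective_min_general (by positivity) h₁₂.ne hpos) x hx⟩
end

section
/- Let P > 0 and a₂ > 0 be real numbers with 1 ≤ a₂² ≤ P+1, and define g : ℝ → ℝ by g(α) = (1/4)·log(1+α·P) + (1/2)·log(1 + (1−α)·P/(a₂²+α·P+1)), where log is the natural logarithm. Set α* = (a₂²−1)/P, which lies in [0,1]. Then for every α with 0 ≤ α ≤ 1, g(α) ≤ g(α*). -/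
/-!
In the variable `x = 1 + α P` the rate is
`(1/2) log (a₂² + P + 1) + (1/4) (log x - 2 log (a₂² + x))`. By AM-GM, `x / (c + x)²` is largest
at `x = c`, so the best choice is `1 + α P = a₂²`.
-/

open Set

/-- Achievable rate, in nats, of the two-codeword scheme for the dirty paper channel with two fading
values, the larger being `a₂`, when the fraction `α` of the power `P` goes to the codeword that
treats the state as noise. -/
noncomputable def innerBoundRate (P a₂ α : ℝ) : ℝ :=
  (1 / 4) * Real.log (1 + α * P)
    + (1 / 2) * Real.log (1 + (1 - α) * P / (a₂ ^ 2 + α * P + 1))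

lemma log_four_mul_mul_le_two_mul_log_add {x y : ℝ} (hx : 0 < x) (hy : 0 < y) :
    Real.log (4 * x * y) ≤ 2 * Real.log (x + y) :=
  calc Real.log (4 * x * y) ≤ Real.log ((x + y) ^ 2) :=
        Real.log_le_log (by positivity) (four_mul_le_sq_add x y)
    _ = 2 * Real.log (x + y) := by rw [Real.log_pow, Nat.cast_ofNat]

lemma isMaxOn_log_sub_two_mul_log_add {c : ℝ} (hc : 0 < c) :
    IsMaxOn (fun x => Real.log x - 2 * Real.log (c + x)) (Ioi 0) c := by
  refine isMaxOn_iff.2 fun x (hx : 0 < x) => ?_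
  have amgm : Real.log (4 * c) + Real.log x ≤ 2 * Real.log (c + x) := by
    rw [← Real.log_mul (by positivity) hx.ne']
    exact log_four_mul_mul_le_two_mul_log_add hc hx
  have amgm_eq : Real.log (4 * c) + Real.log c = 2 * Real.log (c + c) := by
    rw [← Real.log_mul (by positivity) hc.ne', show 4 * c * c = (c + c) ^ 2 by ring,
      Real.log_pow, Nat.cast_ofNat]
  linarith

lemma innerBoundRate_eq {P α : ℝ} (a₂ : ℝ) (hP : 0 < P) (hα : 0 < 1 + α * P) :
    innerBoundRate P a₂ α = (1 / 2) * Real.log (a₂ ^ 2 + P + 1)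
      + (1 / 4) * (Real.log (1 + α * P) - 2 * Real.log (a₂ ^ 2 + (1 + α * P))) := by
  have hden : a₂ ^ 2 + (1 + α * P) ≠ 0 := by positivity
  have hfrac : 1 + (1 - α) * P / (a₂ ^ 2 + α * P + 1)
      = (a₂ ^ 2 + P + 1) / (a₂ ^ 2 + (1 + α * P)) := by
    rw [show a₂ ^ 2 + α * P + 1 = a₂ ^ 2 + (1 + α * P) by ring]
    field_simp
    ring
  rw [innerBoundRate, hfrac, Real.log_div (by positivity) hden]
  ring

lemma sub_one_div_mem_Icc_iff {P c : ℝ} (hP : 0 < P) :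
    (c - 1) / P ∈ Icc 0 1 ↔ c ∈ Icc 1 (P + 1) := by
  rw [mem_Icc, mem_Icc, le_div_iff₀ hP, zero_mul, sub_nonneg, div_le_one hP,
    sub_le_iff_le_add]

theorem inner_bound_rate_max_general {P a₂ : ℝ} (hP : 0 < P) (ha₂ : a₂ ≠ 0) :
    IsMaxOn (innerBoundRate P a₂) {α | 0 < 1 + α * P} ((a₂ ^ 2 - 1) / P) := by
  refine isMaxOn_iff.2 fun α (hα : 0 < 1 + α * P) => ?_
  have hc : 0 < a₂ ^ 2 := by positivity
  have hopt : 1 + (a₂ ^ 2 - 1) / P * P = a₂ ^ 2 := by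
    rw [div_mul_cancel₀ _ hP.ne', add_sub_cancel]
  rw [innerBoundRate_eq a₂ hP hα, innerBoundRate_eq a₂ hP (hopt.symm ▸ hc), hopt]
  gcongr (1 / 2) * Real.log (a₂ ^ 2 + P + 1) + (1 / 4) * ?_
  exact isMaxOn_log_sub_two_mul_log_add hc hα

/-- When `1 ≤ a₂² ≤ P+1`, the critical point `α* = (a₂²−1)/P ∈ [0,1]` maximizes
the inner-bound rate `g` over `[0,1]` (appendix proof of Theorem 5 of the paper). -/
theorem inner_bound_rate_max (P a₂ : ℝ) (hP : 0 < P) (ha₂ : 0 < a₂)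
    (h₁ : 1 ≤ a₂^2) (h₂ : a₂^2 ≤ P + 1) :
    let g : ℝ → ℝ := fun α =>
      (1/4) * Real.log (1 + α * P)
        + (1/2) * Real.log (1 + (1 - α) * P / (a₂^2 + α * P + 1))
    let αs := (a₂^2 - 1) / P
    (0 ≤ αs ∧ αs ≤ 1) ∧ ∀ α : ℝ, 0 ≤ α → α ≤ 1 → g α ≤ g αs :=
  ⟨(sub_one_div_mem_Icc_iff hP).2 ⟨h₁, h₂⟩, fun α hα _ =>
    isMaxOn_iff.1 (inner_bound_rate_max_general hP ha₂.ne') α (by positivity : 0 < 1 + α * P)⟩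
end

section
/- Let P > 0 and a₂ > 0 be real numbers with a₂² ≥ P+1, and define g : ℝ → ℝ by g(α) = (1/4)·log(1+α·P) + (1/2)·log(1 + (1−α)·P/(a₂²+α·P+1)), where log is the natural logarithm. Then for every α with 0 ≤ α ≤ 1, g(α) ≤ g(1) = (1/4)·log(1+P). -/
/-!
Put `A = a₂²`, `y = 1 + P` and `x = 1 + α P`. Since `1 + (y - x) / (A + x) = (A + y) / (A + x)`, the
rate is `log (x / (A + x)²) / 4` plus a term that does not depend on `x`. For `x ≤ z` the difference
`z (A + x)² - x (A + z)² = (z - x) (A² - x z)` is nonnegative when `x, z ∈ [0, A]`, so the rate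
increases with `x` up to `x = A`, and the condition `P + 1 ≤ a₂²` says that `y` lies in this range.
-/

theorem monotoneOn_div_add_sq {K : Type*} [Field K] [LinearOrder K] [IsStrictOrderedRing K]
    (A : K) : MonotoneOn (fun x : K => x / (A + x) ^ 2) (Set.Icc 0 A) := by
  rintro x ⟨hx, hxA⟩ z ⟨hz, hzA⟩ hxz
  obtain rfl | hx := hx.eq_or_lt
  · simpa only [zero_div] using div_nonneg hz (sq_nonneg (A + z))
  have hA : 0 < A := hx.trans_le hxA
  have hmul : x * z ≤ A * A := mul_le_mul hxA hzA hz hA.le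
  have hdiff : 0 ≤ z * (A + x) ^ 2 - x * (A + z) ^ 2 :=
    calc
      0 ≤ (z - x) * (A * A - x * z) := mul_nonneg (sub_nonneg.2 hxz) (sub_nonneg.2 hmul)
      _ = z * (A + x) ^ 2 - x * (A + z) ^ 2 := by ring
  exact (div_le_div_iff₀ (by positivity) (by positivity)).2 (sub_nonneg.1 hdiff)

/-- The rate, in nats, of the two-codeword inner bound for the dirty paper channel, as a function of
`x = 1 + α P`; the parameters are `A = a₂²` and `y = 1 + P`. -/
noncomputable def twoCodewordRate (A y x : ℝ) : ℝ :=
  1 / 4 * Real.log x + 1 / 2 * Real.log (1 + (y - x) / (A + x))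

theorem twoCodewordRate_self (A y : ℝ) : twoCodewordRate A y y = 1 / 4 * Real.log y := by
  simp [twoCodewordRate]

theorem twoCodewordRate_eq_log_div_add {A y x : ℝ} (hx : x ≠ 0) (hAx : A + x ≠ 0)
    (hAy : A + y ≠ 0) :
    twoCodewordRate A y x =
      1 / 4 * Real.log (x / (A + x) ^ 2) + 1 / 2 * Real.log (A + y) := by
  have hratio : 1 + (y - x) / (A + x) = (A + y) / (A + x) := by
    field_simp
    ring
  rw [twoCodewordRate, hratio, Real.log_div hAy hAx, Real.log_div hx (pow_ne_zero 2 hAx),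
    Real.log_pow]
  push_cast
  ring

theorem monotoneOn_twoCodewordRate {A y : ℝ} (hAy : A + y ≠ 0) :
    MonotoneOn (twoCodewordRate A y) (Set.Ioc 0 A) := by
  rintro x ⟨hx, hxA⟩ z ⟨hz, hzA⟩ hxz
  have hAx : 0 < A + x := by linarith
  have hAz : 0 < A + z := by linarith
  have hdiv : x / (A + x) ^ 2 ≤ z / (A + z) ^ 2 :=
    monotoneOn_div_add_sq A ⟨hx.le, hxA⟩ ⟨hz.le, hzA⟩ hxz
  rw [twoCodewordRate_eq_log_div_add hx.ne' hAx.ne' hAy,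
    twoCodewordRate_eq_log_div_add hz.ne' hAz.ne' hAy]
  gcongr

/-- When `a₂² ≥ P+1`, the inner-bound rate `g` is maximized over `[0,1]` at `α = 1`
(appendix proof of Theorem 5 of the paper). -/
theorem inner_bound_rate_max_at_one (P a₂ : ℝ) (hP : 0 < P) (ha₂ : 0 < a₂)
    (h : P + 1 ≤ a₂^2) :
    let g : ℝ → ℝ := fun α =>
      (1/4) * Real.log (1 + α * P)
        + (1/2) * Real.log (1 + (1 - α) * P / (a₂^2 + α * P + 1))
    (∀ α : ℝ, 0 ≤ α → α ≤ 1 → g α ≤ g 1) ∧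
      g 1 = (1/4) * Real.log (1 + P) := by
  intro g
  have g_eq (α : ℝ) : g α = twoCodewordRate (a₂ ^ 2) (1 + P) (1 + α * P) := by
    simp only [g, twoCodewordRate]
    ring_nf
  have g_one : g 1 = twoCodewordRate (a₂ ^ 2) (1 + P) (1 + P) := by rw [g_eq, one_mul]
  refine ⟨fun α hα₀ hα₁ => ?_, g_one.trans (twoCodewordRate_self _ _)⟩
  have hx : 0 < 1 + α * P := by positivity
  have hxy : 1 + α * P ≤ 1 + P := by gcongr; exact mul_le_of_le_one_left hP.le hα₁
  have hyA : 1 + P ≤ a₂ ^ 2 := by rwa [add_comm]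
  rw [g_eq, g_one]
  exact monotoneOn_twoCodewordRate (by positivity) ⟨hx, hxy.trans hyA⟩
    ⟨hx.trans_le hxy, hyA⟩ hxy
end

section
/- Let P > 0 and 0 ≤ a₁ < a₂ be real numbers with a₁·a₂ ≤ P+1 ≤ a₂². Then ((1/4)·log₂(1+P) + (1/4)·log₂(P+1+a₂²) − (1/4)·log₂((a₂−a₁)²) + 3/2) − (1/4)·log₂(1+P) ≤ (1/2)·log₂((a₂+a₁)/(a₂−a₁)) + 2. -/
/-!
The two copies of `(1/4) log₂ (1 + P)` cancel. Both `P + 1` and `a₂²` are at most `(a₂ + a₁)²`, so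
replacing their sum by `2 (a₂ + a₁)²` costs one bit inside the logarithm, that is, `1/4` of a bit
in the rate. What remains is `(1/4) log₂` of a quotient of squares, plus `3/2 + 1/4`.
-/

theorem logb_two_add_le_one_add_logb {x y s : ℝ} (hxy : 0 < x + y) (hx : x ≤ s) (hy : y ≤ s) :
    Real.logb 2 (x + y) ≤ 1 + Real.logb 2 s := by
  have hs : s ≠ 0 := by linarith
  calc Real.logb 2 (x + y)
      ≤ Real.logb 2 (2 * s) := Real.logb_le_logb_of_le one_lt_two hxy (by linarith)
    _ = 1 + Real.logb 2 s := by
      rw [Real.logb_mul two_ne_zero hs, Real.logb_self_eq_one one_lt_two]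

theorem logb_sq_sub_logb_sq (b : ℝ) {x y : ℝ} (hx : x ≠ 0) (hy : y ≠ 0) :
    Real.logb b (x ^ 2) - Real.logb b (y ^ 2) = 2 * Real.logb b (x / y) := by
  rw [← Real.logb_div (pow_ne_zero 2 hx) (pow_ne_zero 2 hy), ← div_pow, Real.logb_pow,
    Nat.cast_ofNat]

/-- The constant `7/4` is optimal: equality holds for `a₁ = 0` and `P + 1 = a₂²`. -/
theorem gap_case_III_general (P a₁ a₂ : ℝ) (hP : -1 < P) (ha₁ : 0 ≤ a₁) (h₁₂ : a₁ < a₂)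
    (ha₂ : P + 1 ≤ a₂ ^ 2) :
    ((1/4) * Real.logb 2 (1 + P) + (1/4) * Real.logb 2 (P + 1 + a₂ ^ 2)
        - (1/4) * Real.logb 2 ((a₂ - a₁) ^ 2) + 3/2)
      - (1/4) * Real.logb 2 (1 + P)
    ≤ (1/2) * Real.logb 2 ((a₂ + a₁) / (a₂ - a₁)) + 7/4 := by
  have ha₂_pos : 0 < a₂ := ha₁.trans_lt h₁₂
  have h_sq : a₂ ^ 2 ≤ (a₂ + a₁) ^ 2 := by gcongr; exact le_add_of_nonneg_right ha₁
  have h_sum : Real.logb 2 (P + 1 + a₂ ^ 2) ≤ 1 + Real.logb 2 ((a₂ + a₁) ^ 2) :=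
    logb_two_add_le_one_add_logb (by linarith [sq_nonneg a₂]) (ha₂.trans h_sq) h_sq
  have h_ratio : Real.logb 2 ((a₂ + a₁) ^ 2) - Real.logb 2 ((a₂ - a₁) ^ 2)
      = 2 * Real.logb 2 ((a₂ + a₁) / (a₂ - a₁)) :=
    logb_sq_sub_logb_sq 2 (add_pos_of_pos_of_nonneg ha₂_pos ha₁).ne' (sub_pos.2 h₁₂).ne'
  linarith

/-- Case III of the gap computation in Theorem 6 of the paper: regime
`a₁·a₂ ≤ P+1 ≤ a₂²`. -/
theorem gap_case_III (P a₁ a₂ : ℝ) (hP : 0 < P) (ha₁ : 0 ≤ a₁) (h₁₂ : a₁ < a₂)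
    (hprod : a₁ * a₂ ≤ P + 1) (ha₂ : P + 1 ≤ a₂^2) :
    ((1/4) * Real.logb 2 (1 + P) + (1/4) * Real.logb 2 (P + 1 + a₂^2)
        - (1/4) * Real.logb 2 ((a₂ - a₁)^2) + 3/2)
      - (1/4) * Real.logb 2 (1 + P)
    ≤ (1/2) * Real.logb 2 ((a₂ + a₁) / (a₂ - a₁)) + 2 :=
  (gap_case_III_general P a₁ a₂ (by linarith) ha₁ h₁₂ ha₂).trans (by gcongr; norm_num)
end

section
/- Let M ≥ 1 be a natural number, let P > 0, and let a : Fin M → ℝ be monotone (nondecreasing) with 0 ≤ a(0). Let ā = (∑ⱼ a(j))/M be the mean of the values a(j), and let ε = a(M−1) − a(0). Then for every index j, (1/2)·log₂(1+P) − (1/2)·log₂( (P+1) / (1 + (ā − a(j))²·P/(P + a(j)² + 1)) ) ≤ (1/2)·log₂(1 + ε²·P/(P + a(0)² + 1)). -/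
/-!
The loss of Costa pre-coding against a mismatched state is exactly the capacity of a Gaussian
channel whose signal-to-noise ratio is the residual interference power. That power grows with the
mismatch and decreases with the fading value, so its worst case over receivers in `[l, u]` is
bounded by combining the largest mismatch `u - l` with the smallest fading value `l`. An average of
fading values is an admissible pre-coding target because it lies between their extremes.
-/

open Finset

/-- The capacity `(1/2)·log₂(1 + s)` of the real Gaussian channel at signal-to-noise ratio `s`; it
expresses both the outer bound and the gap to it. -/
noncomputable def gaussianCapacity (s : ℝ) : ℝ :=
  (1 / 2) * Real.logb 2 (1 + s)

/-- The residual interference power, relative to unit noise, at a receiver with fading value `x`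
when the pre-coding target differs from `x` by `d`; its denominator is the power received
from an input of power `P`, a unit-power state and the noise. -/
noncomputable def residualInterference (P d x : ℝ) : ℝ :=
  d ^ 2 * P / (P + x ^ 2 + 1)

/-- The rate achieved at a receiver with fading value `x` by Costa pre-coding against the state
scaled by `b`, with input power `P`. -/
noncomputable def costaRate (P b x : ℝ) : ℝ :=
  (1 / 2) * Real.logb 2 ((P + 1) / (1 + residualInterference P (b - x) x))

section GaussianChannel

variable {P : ℝ}

lemma gaussianCapacity_le_gaussianCapacity {s t : ℝ} (hs : -1 < s) (hst : s ≤ t) :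
    gaussianCapacity s ≤ gaussianCapacity t := by
  have hlog : Real.logb 2 (1 + s) ≤ Real.logb 2 (1 + t) :=
    Real.logb_le_logb_of_le one_lt_two (by linarith) (by linarith)
  exact mul_le_mul_of_nonneg_left hlog one_half_pos.le

lemma residualInterference_nonneg (hP : 0 ≤ P) (d x : ℝ) : 0 ≤ residualInterference P d x := by
  unfold residualInterference
  positivity

lemma residualInterference_le_residualInterference {d e x y : ℝ} (hP : 0 ≤ P)
    (hde : |d| ≤ |e|) (hyx : |y| ≤ |x|) :
    residualInterference P d x ≤ residualInterference P e y := by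
  have hmismatch : d ^ 2 ≤ e ^ 2 := sq_le_sq.2 hde
  have hfading : y ^ 2 ≤ x ^ 2 := sq_le_sq.2 hyx
  unfold residualInterference
  gcongr

lemma gaussianCapacity_sub_costaRate (hP : 0 ≤ P) (b x : ℝ) :
    gaussianCapacity P - costaRate P b x =
      gaussianCapacity (residualInterference P (b - x) x) := by
  have hres := residualInterference_nonneg hP (b - x) x
  unfold gaussianCapacity costaRate
  rw [Real.logb_div (by positivity) (by positivity), add_comm P 1]
  ring

theorem constant_gap_M_small_fading_general {l u b x : ℝ} (hP : 0 ≤ P) (hl : 0 ≤ l)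
    (hb : b ∈ Set.Icc l u) (hx : x ∈ Set.Icc l u) :
    gaussianCapacity P - costaRate P b x ≤
      gaussianCapacity (residualInterference P (u - l) l) := by
  have hmismatch : |b - x| ≤ |u - l| := (Real.dist_le_of_mem_Icc hb hx).trans (le_abs_self _)
  have hfading : |l| ≤ |x| := abs_le_abs_of_nonneg hl hx.1
  rw [gaussianCapacity_sub_costaRate hP]
  exact gaussianCapacity_le_gaussianCapacity
    (neg_one_lt_zero.trans_le (residualInterference_nonneg hP _ _))
    (residualInterference_le_residualInterference hP hmismatch hfading)

end GaussianChannel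

lemma sum_div_card_mem_Icc {ι K : Type*} [Field K] [LinearOrder K] [IsStrictOrderedRing K]
    {s : Finset ι} {f : ι → K} {l u : K} (hs : s.Nonempty) (hf : ∀ i ∈ s, f i ∈ Set.Icc l u) :
    (∑ i ∈ s, f i) / (#s : K) ∈ Set.Icc l u := by
  rw [← expect_eq_sum_div_card]
  exact ⟨le_expect hs fun i hi ↦ (hf i hi).1, expect_le hs fun i hi ↦ (hf i hi).2⟩

/-- Constant additive gap for `M` small fading values (Lemma 2 of the paper):
Costa pre-coding against the averaged state attains the outer bound
`(1/2)·log₂(1+P)` to within `(1/2)·log₂(1 + ε²·P/(P + a(0)² + 1))`. -/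
theorem constant_gap_M_small_fading (M : ℕ) (hM : 1 ≤ M) (P : ℝ) (hP : 0 < P)
    (a : Fin M → ℝ) (hmono : Monotone a) (h0 : 0 ≤ a ⟨0, by omega⟩) :
    ∀ j : Fin M,
      (1/2) * Real.logb 2 (1 + P)
        - (1/2) * Real.logb 2 ((P + 1) /
            (1 + ((∑ i, a i) / (M : ℝ) - a j)^2 * P / (P + (a j)^2 + 1)))
      ≤ (1/2) * Real.logb 2
          (1 + (a ⟨M - 1, by omega⟩ - a ⟨0, by omega⟩)^2 * P
            / (P + (a ⟨0, by omega⟩)^2 + 1)) := by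
  intro j
  have hrange (i : Fin M) : a i ∈ Set.Icc (a ⟨0, by omega⟩) (a ⟨M - 1, by omega⟩) :=
    ⟨hmono (Nat.zero_le _), hmono (Nat.le_sub_one_of_lt i.isLt)⟩
  have hmean : (∑ i, a i) / (M : ℝ) ∈ Set.Icc (a ⟨0, by omega⟩) (a ⟨M - 1, by omega⟩) := by
    simpa only [card_univ, Fintype.card_fin] using
      sum_div_card_mem_Icc ⟨j, mem_univ j⟩ fun i _ ↦ hrange i
  exact constant_gap_M_small_fading_general hP.le h0 hmean (hrange j)
end
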